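/- Let n ≥ 2 and m ≥ 1. For each k = 1, …, m, let L_k ≤ F^(1)_m × … × F^(n-1)_m be the kernel of the homomorphism θ_k : F^(1)_m × … × F^(n-1)_m → ℤ^{m-1} given by θ_k(e^(i)_j) = t_j if 1 ≤ j ≤ k−1, θ_k(e^(i)_k) = 0, and θ_k(e^(i)_j) = t_{j-1} if k+1 ≤ j ≤ m, and let M = K^{n-1}_m(m). Then M is a subgroup of each L_k, and K^n_m(m) is isomorphic to the amalgamated free product L_1 ∗_M L_2 ∗_M … ∗_M L_m of the groups L_k amalgamated along the common subgroup M (the amalgamated product along the inclusion homomorphisms M ↪ L_k). -/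

import Mathlib

/-- The element `t_j` of `ℤ^r` (written multiplicatively), where indices `j ≥ r` map to `0`. -/
def tvec (m r : ℕ) (j : Fin m) : Multiplicative (Fin r → ℤ) :=
  Multiplicative.ofAdd (if h : (j : ℕ) < r then Pi.single (⟨j, h⟩ : Fin r) (1 : ℤ) else 0)

/-- The homomorphism `F_m → ℤ^r` sending `e_j ↦ t_j` for `j ≤ r` and `e_j ↦ 0` for `j > r`. -/
def facHom (m r : ℕ) : FreeGroup (Fin m) →* Multiplicative (Fin r → ℤ) :=
  FreeGroup.lift (tvec m r)

/-- The homomorphism `θ : F_m^(1) × ⋯ × F_m^(n) → ℤ^r` with `θ(e^(i)_j) = t_j` for `j ≤ r`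
and `θ(e^(i)_j) = 0` for `j > r`. -/
def thetaHom (n m r : ℕ) : (∀ _ : Fin n, FreeGroup (Fin m)) →* Multiplicative (Fin r → ℤ) where
  toFun g := ∏ i, facHom m r (g i)
  map_one' := by simp
  map_mul' a b := by simp [Finset.prod_mul_distrib]

/-- The group `K^n_m(r) = ker θ`. -/
def Kgrp (n m r : ℕ) : Subgroup (∀ _ : Fin n, FreeGroup (Fin m)) := (thetaHom n m r).ker

/-- The values of `θ_k` on the basis of one free factor: `e_j ↦ t_j` for `j ≤ k-1`,
`e_k ↦ 0`, and `e_j ↦ t_{j-1}` for `j ≥ k+1` (1-indexed). -/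
def tveck (m : ℕ) (k : Fin m) (j : Fin m) : Multiplicative (Fin (m - 1) → ℤ) :=
  Multiplicative.ofAdd <|
    if h : (j : ℕ) < (k : ℕ) then
      Pi.single (⟨j, by have := k.isLt; omega⟩ : Fin (m - 1)) (1 : ℤ)
    else if h' : (k : ℕ) < (j : ℕ) then
      Pi.single (⟨(j : ℕ) - 1, by have := j.isLt; omega⟩ : Fin (m - 1)) (1 : ℤ)
    else 0

/-- The homomorphism `θ_k : F_m^(1) × ⋯ × F_m^(n-1) → ℤ^{m-1}`. -/
def thetaKHom (n m : ℕ) (k : Fin m) :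
    (∀ _ : Fin (n - 1), FreeGroup (Fin m)) →* Multiplicative (Fin (m - 1) → ℤ) where
  toFun g := ∏ i, FreeGroup.lift (tveck m k) (g i)
  map_one' := by simp
  map_mul' a b := by simp [Finset.prod_mul_distrib]

/-- The group `L_k = ker θ_k`. -/
def Lgrp (n m : ℕ) (k : Fin m) : Subgroup (∀ _ : Fin (n - 1), FreeGroup (Fin m)) :=
  (thetaKHom n m k).ker

/-! Projecting `K^n_m(m)` to its first coordinate exhibits it as the fibre product over `ℤ^m` of
`G = F_m^(2) × ⋯ × F_m^(n)`, mapped by `θ`, and the free group `F_m`, mapped by `e_j ↦ t_j⁻¹`. The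
latter is the free product of the infinite cyclic groups `⟨t_k⟩`, and `L_k` is the preimage of
`⟨t_k⟩` under `θ`. Quotienting the amalgam of the `L_k` by `M = ker θ` gives the free product of the
`L_k / M = ⟨t_k⟩`, so the amalgam and `K^n_m(m)` are extensions of the same group by the same kernel
`M`, and the evident homomorphism between them is an isomorphism. -/

open Monoid

section PushoutExtension

variable {ι H K : Type*} {G Q : ι → Type*} [Group H] [Group K] [∀ i, Group (G i)]
  [∀ i, Group (Q i)] {φ : ∀ i, H →* G i}

theorem range_base_normal (hφ : ∀ i, (φ i).range.Normal) : (PushoutI.base φ).range.Normal := by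
  refine ⟨fun n hn p => ?_⟩
  induction p using PushoutI.induction_on generalizing n with
  | of i g =>
    obtain ⟨h, rfl⟩ := hn
    obtain ⟨h', hh'⟩ := (hφ i).conj_mem (φ i h) ⟨h, rfl⟩ g
    exact ⟨h', by simp only [← PushoutI.of_apply_eq_base φ i, hh', map_mul, map_inv]⟩
  | base h => exact mul_mem (mul_mem ⟨h, rfl⟩ hn) (inv_mem ⟨h, rfl⟩)
  | mul x y hx hy => simpa only [mul_inv_rev, mul_assoc] using hx _ (hy n hn)

/-- The homomorphism from the amalgamated product of the `G i` to the free product of the `Q i`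
induced by homomorphisms `q i : G i →* Q i` which kill the amalgamated subgroup. -/
def pushoutToCoprodI {q : ∀ i, G i →* Q i} (hq : ∀ i, (q i).ker = (φ i).range) :
    PushoutI φ →* CoprodI Q :=
  PushoutI.lift (fun i => CoprodI.of.comp (q i)) 1 fun i => by
    ext h
    have : q i (φ i h) = 1 := (hq i).ge ⟨h, rfl⟩
    simp [this]

variable {q : ∀ i, G i →* Q i} (hq : ∀ i, (q i).ker = (φ i).range)

@[simp]
theorem pushoutToCoprodI_of (i : ι) (g : G i) :
    pushoutToCoprodI hq (PushoutI.of i g) = CoprodI.of (q i g) := by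
  simp [pushoutToCoprodI]

@[simp]
theorem pushoutToCoprodI_base (h : H) : pushoutToCoprodI hq (PushoutI.base φ h) = 1 := by
  simp [pushoutToCoprodI]

theorem pushoutToCoprodI_surjective (hsurj : ∀ i, Function.Surjective (q i)) :
    Function.Surjective (pushoutToCoprodI hq) := by
  intro x
  induction x using CoprodI.induction_on with
  | one => exact ⟨1, map_one _⟩
  | of i y =>
    obtain ⟨g, rfl⟩ := hsurj i y
    exact ⟨PushoutI.of i g, pushoutToCoprodI_of hq i g⟩
  | mul x y hx hy =>
    obtain ⟨⟨p, rfl⟩, ⟨r, rfl⟩⟩ := And.intro hx hy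
    exact ⟨p * r, map_mul _ p r⟩

theorem ker_pushoutToCoprodI (hsurj : ∀ i, Function.Surjective (q i)) :
    (pushoutToCoprodI hq).ker = (PushoutI.base φ).range := by
  have : (PushoutI.base φ).range.Normal :=
    range_base_normal fun i => hq i ▸ MonoidHom.normal_ker (q i)
  let mk := QuotientGroup.mk' (PushoutI.base φ).range
  have mk_base (h : H) : mk (PushoutI.base φ h) = 1 := (QuotientGroup.eq_one_iff _).2 ⟨h, rfl⟩
  have ker_le (i : ι) : (q i).ker ≤ (mk.comp (PushoutI.of i)).ker := by
    rw [hq]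
    rintro _ ⟨h, rfl⟩
    simp [MonoidHom.mem_ker, PushoutI.of_apply_eq_base, mk_base]
  let τ : CoprodI Q →* PushoutI φ ⧸ (PushoutI.base φ).range :=
    CoprodI.lift fun i => (q i).liftOfSurjective (hsurj i) ⟨mk.comp (PushoutI.of i), ker_le i⟩
  have hτ : τ.comp (pushoutToCoprodI hq) = mk := by
    refine PushoutI.hom_ext (fun i => ?_) ?_ <;> ext x
    · simp [τ]
    · simp [mk_base]
  refine le_antisymm (fun p hp => ?_) ?_
  · rw [← QuotientGroup.eq_one_iff]
    calc mk p = τ (pushoutToCoprodI hq p) := (DFunLike.congr_fun hτ p).symm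
      _ = 1 := by rw [MonoidHom.mem_ker.1 hp, map_one]
  · rintro _ ⟨h, rfl⟩
    exact pushoutToCoprodI_base hq h

/-- The five lemma for the extensions of `CoprodI Q` by `H` given by `PushoutI φ` and `K`. -/
theorem pushoutI_lift_bijective {f : ∀ i, G i →* K} {f₀ : H →* K}
    (hq : ∀ i, (q i).ker = (φ i).range) (hsurj : ∀ i, Function.Surjective (q i))
    (hf : ∀ i, (f i).comp (φ i) = f₀)
    (hf₀ : Function.Injective f₀) {π : K →* CoprodI Q} (hπ : π.ker = f₀.range)
    (hπf : ∀ i, π.comp (f i) = CoprodI.of.comp (q i)) :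
    Function.Bijective (PushoutI.lift f f₀ hf) := by
  have hπ_lift (p : PushoutI φ) : π (PushoutI.lift f f₀ hf p) = pushoutToCoprodI hq p := by
    refine DFunLike.congr_fun (f := π.comp _) (PushoutI.hom_ext (fun i => ?_) ?_) p <;> ext x
    · simpa using DFunLike.congr_fun (hπf i) x
    · simpa using hπ.ge ⟨x, rfl⟩
  constructor
  · refine (injective_iff_map_eq_one _).2 fun p hp => ?_
    have hp_ker : p ∈ (pushoutToCoprodI hq).ker := by
      rw [MonoidHom.mem_ker, ← hπ_lift, hp, map_one]
    obtain ⟨h, rfl⟩ := (ker_pushoutToCoprodI hq hsurj).le hp_ker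
    rw [PushoutI.lift_base] at hp
    rw [(map_eq_one_iff f₀ hf₀).1 hp, map_one]
  · intro k
    obtain ⟨p, hp⟩ := pushoutToCoprodI_surjective hq hsurj (π k)
    have hk : (PushoutI.lift f f₀ hf p)⁻¹ * k ∈ π.ker := by
      rw [MonoidHom.mem_ker, map_mul, map_inv, hπ_lift, hp, inv_mul_cancel]
    obtain ⟨h, hh⟩ := hπ.le hk
    exact ⟨p * PushoutI.base φ h, by rw [map_mul, PushoutI.lift_base, hh, mul_inv_cancel_left]⟩

end PushoutExtension

section FibreProduct

variable {ι A B G : Type*} [Group A] [Group B] [Group G]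

/-- The fibre product `G ×_A B` of two group homomorphisms with common codomain. -/
def fibreProduct (θ : G →* A) (β : B →* A) : Subgroup (G × B) :=
  (θ.comp (MonoidHom.fst G B)).eqLocus (β.comp (MonoidHom.snd G B))

theorem mem_fibreProduct {θ : G →* A} {β : B →* A} {p : G × B} :
    p ∈ fibreProduct θ β ↔ θ p.1 = β p.2 :=
  Iff.rfl

/-- An isomorphism restricts to an isomorphism from the preimage of a subgroup to that subgroup. -/
noncomputable def subgroupComapEquiv (e : G ≃* B) (S : Subgroup B) :
    S.comap (e : G →* B) ≃* S :=
  (e.subgroupMap _).trans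
    (MulEquiv.subgroupCongr (Subgroup.map_comap_eq_self_of_surjective e.surjective S))

theorem subgroupComap_surjective {θ : G →* A} {S : Subgroup A} (hS : S ≤ θ.range) :
    Function.Surjective (θ.subgroupComap S) := by
  rintro ⟨a, ha⟩
  obtain ⟨g, rfl⟩ := hS ha
  exact ⟨⟨g, ha⟩, rfl⟩

theorem ker_subgroupComap (θ : G →* A) (S : Subgroup A) :
    (θ.subgroupComap S).ker = (Subgroup.inclusion (Subgroup.ker_le_comap θ S)).range := by
  ext g
  constructor
  · exact fun hg => ⟨⟨g, congrArg Subtype.val hg⟩, rfl⟩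
  · rintro ⟨h, rfl⟩
    exact Subtype.ext h.2

/-- The embedding `g ↦ (g, 1)` of `ker θ` into the fibre product. -/
def kerToFibreProduct (θ : G →* A) (β : B →* A) : θ.ker →* fibreProduct θ β :=
  (θ.ker.subtype.prod 1).codRestrict _ fun g => g.2.trans (map_one β).symm

theorem kerToFibreProduct_injective (θ : G →* A) (β : B →* A) :
    Function.Injective (kerToFibreProduct θ β) :=
  fun _ _ hgh => Subtype.ext (congrArg (fun p => p.1.1) hgh)

theorem ker_snd_fibreProduct (θ : G →* A) (β : B →* A) :
    ((MonoidHom.snd G B).comp (fibreProduct θ β).subtype).ker = (kerToFibreProduct θ β).range := by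
  ext p
  constructor
  · intro (hp : p.1.2 = 1)
    have hp_ker : θ p.1.1 = 1 := by rw [mem_fibreProduct.1 p.2, hp, map_one]
    exact ⟨⟨p.1.1, hp_ker⟩, Subtype.ext (Prod.ext rfl hp.symm)⟩
  · rintro ⟨g, rfl⟩
    rfl

/-- The embedding `g ↦ (g, θ g)` of `θ⁻¹(S i)` into the fibre product of `G` and the free product
of the subgroups `S j`. -/
def comapToFibreProduct (θ : G →* A) (S : ι → Subgroup A) (i : ι) :
    (S i).comap θ →* fibreProduct θ (CoprodI.lift fun j => (S j).subtype) :=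
  (((S i).comap θ).subtype.prod (CoprodI.of.comp (θ.subgroupComap (S i)))).codRestrict _
    fun g => (CoprodI.lift_of (fun j => (S j).subtype) (θ.subgroupComap (S i) g)).symm

theorem comapToFibreProduct_comp_inclusion (θ : G →* A) (S : ι → Subgroup A) (i : ι) :
    (comapToFibreProduct θ S i).comp (Subgroup.inclusion (Subgroup.ker_le_comap θ (S i))) =
      kerToFibreProduct θ _ := by
  ext g
  · rfl
  · have hg : θ.subgroupComap (S i) (Subgroup.inclusion (Subgroup.ker_le_comap θ (S i)) g) = 1 :=
      Subtype.ext g.2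
    exact (congrArg (CoprodI.of (M := fun j => S j) (i := i)) hg).trans (map_one _)

/-- If each `S i` lies in the range of `θ : G →* A`, then the fibre product over `A` of `G` and the
free product of the `S i` is the amalgamated product of the preimages `θ⁻¹(S i)` along `ker θ`. -/
noncomputable def fibreProductCoprodIEquiv (θ : G →* A) (S : ι → Subgroup A)
    (hS : ∀ i, S i ≤ θ.range) :
    fibreProduct θ (CoprodI.lift fun i => (S i).subtype) ≃*
      PushoutI fun i => Subgroup.inclusion (Subgroup.ker_le_comap θ (S i)) :=
  (MulEquiv.ofBijective (PushoutI.lift (comapToFibreProduct θ S) (kerToFibreProduct θ _)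
      (comapToFibreProduct_comp_inclusion θ S))
    (pushoutI_lift_bijective (fun i => ker_subgroupComap θ (S i))
      (fun i => subgroupComap_surjective (hS i)) (comapToFibreProduct_comp_inclusion θ S)
      (kerToFibreProduct_injective θ _) (ker_snd_fibreProduct θ _) fun _ => rfl)).symm

end FibreProduct

section FreeGroup

variable {ι A G : Type*} [Group A] [Group G]

/-- The free group on `ι` as the free product of infinite cyclic groups `⟨a i⟩`. -/
noncomputable def freeGroupEquivCoprodIZPowers (a : ι → A) (ha : ∀ i, ¬IsOfFinOrder (a i)) :
    FreeGroup ι ≃* CoprodI fun i => Subgroup.zpowers (a i) :=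
  have (i : ι) : Infinite (Subgroup.zpowers (a i)) := (infinite_zpowers.2 (ha i)).to_subtype
  let gen (i : ι) : Subgroup.zpowers (a i) := ⟨a i, Subgroup.mem_zpowers (a i)⟩
  have zpowers_gen (i : ι) : Subgroup.zpowers (gen i) = ⊤ := by
    refine (Subgroup.eq_top_iff' _).2 ?_
    rintro ⟨_, z, rfl⟩
    exact ⟨z, rfl⟩
  let e (i : ι) : Multiplicative ℤ ≃* Subgroup.zpowers (a i) :=
    intEquivOfZPowersEqTop (gen i) (zpowers_gen i)
  MonoidHom.toMulEquiv (FreeGroup.lift fun i => CoprodI.of (gen i))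
    (CoprodI.lift fun i => (zpowersHom _ (FreeGroup.of i)).comp (e i).symm)
    (by ext i; simp [e])
    (by
      ext i x
      obtain ⟨z, rfl⟩ := (e i).surjective x
      simp [e])

theorem lift_subtype_freeGroupEquivCoprodIZPowers (a : ι → A) (ha : ∀ i, ¬IsOfFinOrder (a i))
    (w : FreeGroup ι) :
    CoprodI.lift (fun i => (Subgroup.zpowers (a i)).subtype) (freeGroupEquivCoprodIZPowers a ha w) =
      FreeGroup.lift a w := by
  refine DFunLike.congr_fun (f := (CoprodI.lift fun i => (Subgroup.zpowers (a i)).subtype).comp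
    (freeGroupEquivCoprodIZPowers a ha).toMonoidHom) ?_ w
  ext i
  simp [freeGroupEquivCoprodIZPowers]

/-- The fibre product of `θ : G →* A` and a homomorphism from a free group that sends the basis to
elements `a i` of infinite order in the range of `θ` is an amalgamated product along `ker θ`. -/
noncomputable def fibreProductFreeGroupEquiv (θ : G →* A) (a : ι → A)
    (ha : ∀ i, ¬IsOfFinOrder (a i)) (haθ : ∀ i, a i ∈ θ.range) :
    fibreProduct θ (FreeGroup.lift a) ≃*
      PushoutI fun i => Subgroup.inclusion (Subgroup.ker_le_comap θ (Subgroup.zpowers (a i))) :=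
  let S (i : ι) := Subgroup.zpowers (a i)
  let e : G × FreeGroup ι ≃* G × CoprodI fun i => S i :=
    (MulEquiv.refl G).prodCongr (freeGroupEquivCoprodIZPowers a ha)
  have fibreProduct_eq : fibreProduct θ (FreeGroup.lift a) =
      (fibreProduct θ (CoprodI.lift fun i => (S i).subtype)).comap (e : _ →* _) := by
    ext p
    rw [mem_fibreProduct, ← lift_subtype_freeGroupEquivCoprodIZPowers a ha]
    rfl
  (MulEquiv.subgroupCongr fibreProduct_eq).trans <| (subgroupComapEquiv e _).trans <|
    fibreProductCoprodIEquiv θ S fun i => Subgroup.zpowers_le.2 (haθ i)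

end FreeGroup

section Coordinates

theorem tvec_self (m : ℕ) (j : Fin m) :
    tvec m m j = Multiplicative.ofAdd (Pi.single j 1) := by
  simp [tvec]

theorem not_isOfFinOrder_tvec_self (m : ℕ) (j : Fin m) : ¬IsOfFinOrder (tvec m m j) := by
  rw [isOfFinOrder_iff_eq_one, tvec_self]
  exact fun h => one_ne_zero (Pi.single_eq_zero_iff.1 (congrArg Multiplicative.toAdd h))

theorem thetaHom_mulSingle_of (n m r : ℕ) (i : Fin n) (j : Fin m) :
    thetaHom n m r (Pi.mulSingle i (FreeGroup.of j)) = tvec m r j := by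
  calc thetaHom n m r (Pi.mulSingle i (FreeGroup.of j))
      = facHom m r ((Pi.mulSingle i (FreeGroup.of j) : Fin n → FreeGroup (Fin m)) i) :=
        Fintype.prod_eq_single i fun l hl => by rw [Pi.mulSingle_eq_of_ne hl, map_one]
    _ = tvec m r j := by rw [Pi.mulSingle_eq_same, facHom, FreeGroup.lift_apply_of]

theorem thetaHom_succ (n m r : ℕ) (g : Fin (n + 1) → FreeGroup (Fin m)) :
    thetaHom (n + 1) m r g = facHom m r (g 0) * thetaHom n m r (Fin.tail g) :=
  Fin.prod_univ_succ _

/-- Splitting off the first free factor. -/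
def splitFirst (n m : ℕ) : (Fin (n + 1) → FreeGroup (Fin m)) ≃*
    (Fin n → FreeGroup (Fin m)) × FreeGroup (Fin m) where
  toEquiv := (Fin.consEquiv _).symm.trans (Equiv.prodComm _ _)
  map_mul' _ _ := rfl

theorem Kgrp_succ (n m r : ℕ) :
    Kgrp (n + 1) m r = (fibreProduct (thetaHom n m r)
      (FreeGroup.lift fun j => (tvec m r j)⁻¹)).comap (splitFirst n m) := by
  have lift_inv (w : FreeGroup (Fin m)) :
      FreeGroup.lift (fun j => (tvec m r j)⁻¹) w = (facHom m r w)⁻¹ := by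
    refine DFunLike.congr_fun (g := (facHom m r)⁻¹) ?_ w
    ext j : 1
    simp [facHom]
  ext g
  rw [Subgroup.mem_comap, mem_fibreProduct, lift_inv, Kgrp, MonoidHom.mem_ker, thetaHom_succ,
    mul_comm, mul_eq_one_iff_eq_inv]
  rfl

/-- The projection `ℤ^(m+1) → ℤ^m` forgetting the `k`-th coordinate. -/
def forgetCoord (m : ℕ) (k : Fin (m + 1)) :
    Multiplicative (Fin (m + 1) → ℤ) →* Multiplicative (Fin m → ℤ) :=
  AddMonoidHom.toMultiplicative (LinearMap.funLeft ℤ ℤ k.succAbove).toAddMonoidHom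

@[simp]
theorem toAdd_forgetCoord_apply (m : ℕ) (k : Fin (m + 1))
    (v : Multiplicative (Fin (m + 1) → ℤ)) (i : Fin m) :
    (forgetCoord m k v).toAdd i = v.toAdd (k.succAbove i) :=
  rfl

theorem tveck_self (m : ℕ) (k : Fin m) : tveck m k k = 1 := by
  simp [tveck]

theorem tveck_succAbove (m : ℕ) (k : Fin (m + 1)) (l : Fin m) :
    tveck (m + 1) k (k.succAbove l) = Multiplicative.ofAdd (Pi.single l 1) := by
  obtain hl | hl := lt_or_ge l.castSucc k
  · have : (l : ℕ) < k := hl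
    simp [tveck, Fin.succAbove_of_castSucc_lt k l hl, this]
  · have hkl : (k : ℕ) < l + 1 := Nat.lt_succ_of_le hl
    simp [tveck, Fin.succAbove_of_le_castSucc k l hl, hkl, hkl.le]

theorem forgetCoord_tvec (m : ℕ) (k j : Fin (m + 1)) :
    forgetCoord m k (tvec (m + 1) (m + 1) j) = tveck (m + 1) k j := by
  refine Multiplicative.toAdd.injective (funext fun i => ?_)
  rw [tvec_self]
  obtain rfl | ⟨l, rfl⟩ := k.eq_self_or_eq_succAbove j
  · simp [tveck_self]
  · simp [tveck_succAbove, Pi.single_apply]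

theorem ker_forgetCoord (m : ℕ) (k : Fin (m + 1)) :
    (forgetCoord m k).ker = Subgroup.zpowers (tvec (m + 1) (m + 1) k) := by
  ext v
  rw [Subgroup.mem_zpowers_iff, tvec_self]
  constructor
  · intro hv
    refine ⟨v.toAdd k, Multiplicative.toAdd.injective (funext fun j => ?_)⟩
    obtain rfl | ⟨i, rfl⟩ := k.eq_self_or_eq_succAbove j
    · simp
    · simpa using (congrFun (congrArg Multiplicative.toAdd hv) i).symm
  · rintro ⟨z, rfl⟩
    refine Multiplicative.toAdd.injective (funext fun i => ?_)
    simp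

theorem thetaKHom_eq (n m : ℕ) (k : Fin (m + 1)) :
    thetaKHom (n + 1) (m + 1) k = (forgetCoord m k).comp (thetaHom n (m + 1) (m + 1)) := by
  have lift_tveck : FreeGroup.lift (tveck (m + 1) k) =
      (forgetCoord m k).comp (facHom (m + 1) (m + 1)) := by
    ext j : 1
    simp [facHom, forgetCoord_tvec]
  ext g : 1
  simp [thetaKHom, thetaHom, lift_tveck]

theorem Lgrp_eq_comap_zpowers (n m : ℕ) (k : Fin (m + 1)) :
    Lgrp (n + 1) (m + 1) k =
      (Subgroup.zpowers (tvec (m + 1) (m + 1) k)).comap (thetaHom n (m + 1) (m + 1)) := by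
  rw [← ker_forgetCoord, MonoidHom.comap_ker, ← thetaKHom_eq]
  rfl

end Coordinates

/-- For `n ≥ 2`, `m ≥ 1`: with `M = K^{n-1}_m(m)` and `L_k = ker θ_k` as above, `M ≤ L_k`
for each `k`, and `K^n_m(m)` is isomorphic to the amalgamated free product
`L_1 ∗_M L_2 ∗_M ⋯ ∗_M L_m` (the pushout of the inclusions `M ↪ L_k`). -/
theorem Kgrp_iso_amalgamated_product (n m : ℕ) (hn : 2 ≤ n) (hm : 1 ≤ m) :
    ∃ h : ∀ k : Fin m, Kgrp (n - 1) m m ≤ Lgrp n m k,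
      Nonempty
        ((Kgrp n m m) ≃*
          Monoid.PushoutI (fun k : Fin m => Subgroup.inclusion (h k))) := by
  obtain ⟨n, rfl⟩ := Nat.exists_eq_add_of_le' hn
  obtain ⟨m, rfl⟩ := Nat.exists_eq_add_of_le' hm
  let θ := thetaHom (n + 1) (m + 1) (m + 1)
  let a (k : Fin (m + 1)) := (tvec (m + 1) (m + 1) k)⁻¹
  have hL : Lgrp (n + 2) (m + 1) = fun k => (Subgroup.zpowers (a k)).comap θ :=
    funext fun k => by rw [Lgrp_eq_comap_zpowers, Subgroup.zpowers_inv]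
  have ha (k : Fin (m + 1)) : ¬IsOfFinOrder (a k) := by
    simpa only [a, isOfFinOrder_inv_iff] using not_isOfFinOrder_tvec_self (m + 1) k
  have haθ (k : Fin (m + 1)) : a k ∈ θ.range := inv_mem ⟨_, thetaHom_mulSingle_of _ _ _ 0 k⟩
  rw [hL, Kgrp_succ]
  exact ⟨fun k => Subgroup.ker_le_comap θ (Subgroup.zpowers (a k)),
    ⟨(subgroupComapEquiv (splitFirst (n + 1) (m + 1)) _).trans
      (fibreProductFreeGroupEquiv θ a ha haθ)⟩⟩
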